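/- Let G be a group and G₀ ≤ G a subgroup such that: (i) every finite subset of G is contained in some G-conjugate of G₀; and (ii) G contains an element g such that for all integers p ≠ q, every element of g^p G₀ g^{−p} commutes with every element of g^q G₀ g^{−q}. Then Hb^n(G, E) = 0 holds for all n ≥ 1 and all separable dual Banach G-modules E. -/

import Mathlib

open scoped BigOperators

/-- A cochain (function into a normed space) is bounded if its norms are uniformly bounded. -/
def IsBddCochain {G : Type*} {E : Type*} [NormedAddCommGroup E] {n : ℕ}
    (f : (Fin n → G) → E) : Prop :=
  ∃ C : ℝ, ∀ g, ‖f g‖ ≤ C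

/-- The inhomogeneous coboundary operator of bounded cohomology, for an action `π` of
`G` on `E`:
`(δf)(g₁,…,g_{n+1}) = g₁•f(g₂,…,g_{n+1}) + ∑_{i=1}^{n} (−1)^i f(g₁,…,g_i·g_{i+1},…,g_{n+1})`
`+ (−1)^{n+1} f(g₁,…,g_n)`. -/
def bddDelta {G : Type*} [Group G] {E : Type*} [NormedAddCommGroup E] [Module ℝ E]
    (π : G → E → E) (n : ℕ) (f : (Fin n → G) → E) : (Fin (n + 1) → G) → E :=
  fun g =>
    π (g 0) (f (fun j => g j.succ)) +
    (∑ i : Fin n, ((-1 : ℝ) ^ ((i : ℕ) + 1)) •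
      f (fun j => if (j : ℕ) < (i : ℕ) then g (Fin.castSucc j)
        else if (j : ℕ) = (i : ℕ) then g (Fin.castSucc j) * g j.succ
        else g j.succ)) +
    ((-1 : ℝ) ^ (n + 1)) • f (fun j => g (Fin.castSucc j))

/-- Vanishing of the bounded cohomology `Hb^n(G,E)` for all `n ≥ 1`, with respect to the
`G`-action `π` on `E`: every bounded cocycle of degree `n ≥ 1` is the coboundary of a
bounded cochain. -/
def HbVanish {G : Type*} [Group G] {E : Type*} [NormedAddCommGroup E] [Module ℝ E]
    (π : G → E → E) : Prop :=
  ∀ (n : ℕ) (f : (Fin (n + 1) → G) → E), IsBddCochain f →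
    bddDelta π (n + 1) f = 0 →
    ∃ b : (Fin n → G) → E, IsBddCochain b ∧ bddDelta π n b = f

/-- A group is boundedly acyclic if `Hb^n(G,ℝ) = 0` for all `n ≥ 1`, where `ℝ` carries
the trivial `G`-action. -/
def BoundedlyAcyclic (G : Type*) [Group G] : Prop :=
  HbVanish (G := G) (E := ℝ) (fun _ v => v)

/-- The contragredient action of `G` on the continuous dual of `F` induced by an
isometric action `ρ` of `G` on `F`: `(g • φ)(v) = φ (g⁻¹ • v)`. -/
def contragredient {G : Type*} [Group G] {F : Type*} [NormedAddCommGroup F]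
    [NormedSpace ℝ F] (ρ : G →* (F ≃ₗᵢ[ℝ] F)) : G → (F →L[ℝ] ℝ) → (F →L[ℝ] ℝ) :=
  fun g φ => φ.comp (ρ g⁻¹).toLinearIsometry.toContinuousLinearMap

namespace SelfSim

/-- homogeneous (simplicial) coboundary -/
def dF {α E : Type*} [AddCommGroup E] [Module ℝ E] (n : ℕ) (c : (Fin n → α) → E)
    (g : Fin (n + 1) → α) : E :=
  ∑ j : Fin (n + 1), ((-1 : ℝ) ^ (j : ℕ)) • c (fun k => g (j.succAbove k))

lemma dF_succ {α E : Type*} [AddCommGroup E] [Module ℝ E] (n : ℕ) (c : (Fin (n + 1) → α) → E)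
    (g : Fin (n + 2) → α) :
    dF (n + 1) c g = c (Fin.tail g) -
      dF n (fun l => c (Fin.cons (g 0) l)) (Fin.tail g) := by
  unfold dF
  rw [Fin.sum_univ_succ, sub_eq_add_neg, ← Finset.sum_neg_distrib]
  congr 1
  · simp [Fin.tail_def]
  · refine Finset.sum_congr rfl fun j _ => ?_
    rw [← neg_smul]
    congr 1
    · simp [pow_succ]
    · congr 1
      funext k
      refine Fin.cases ?_ (fun k => ?_) k
      · simp
      · simp [Fin.tail_def]

/-- prism operator -/
def prism {α E : Type*} [AddCommGroup E] : (n : ℕ) → ((Fin (n + 1) → α) → E) →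
    (Fin n → α × α) → E
  | 0, _, _ => 0
  | n + 1, c, z => c (Fin.cons (z 0).1 (Fin.cons (z 0).2 (fun k => (z k.succ).2))) -
      prism n (fun l => c (Fin.cons (z 0).1 l)) (Fin.tail z)

lemma prism_sub {α E : Type*} [AddCommGroup E] (n : ℕ) (c c' : (Fin (n + 1) → α) → E)
    (z : Fin n → α × α) : prism n (fun l => c l - c' l) z = prism n c z - prism n c' z := by
  induction n with
  | zero => simp [prism]
  | succ n ih =>
    simp only [prism, ih]
    abel

lemma dF_sub {α E : Type*} [AddCommGroup E] [Module ℝ E] (n : ℕ) (c c' : (Fin n → α) → E)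
    (g : Fin (n + 1) → α) : dF n (fun l => c l - c' l) g = dF n c g - dF n c' g := by
  simp [dF, smul_sub, Finset.sum_sub_distrib]

lemma prism_dF {α E : Type*} [AddCommGroup E] [Module ℝ E] (n : ℕ) (c : (Fin (n + 1) → α) → E)
    (z : Fin (n + 1) → α × α) :
    prism (n + 1) (dF (n + 1) c) z + dF n (prism n c) z =
      c (fun k => (z k).2) - c (fun k => (z k).1) := by
  induction n with
  | zero =>
    have h1 : (Fin.cons (z 0).2 (fun k : Fin 0 => (z k.succ).2) : Fin 1 → α)
      = (fun k => (z k).2) := by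
      funext k; fin_cases k; rfl
    have h2 : (Fin.cons (z 0).1 (fun k : Fin 0 => (z k.succ).2) : Fin 1 → α)
      = (fun k => (z k).1) := by
      funext k; fin_cases k; rfl
    simp only [prism, dF_succ, Fin.tail_cons, Fin.cons_zero, h1]
    simp only [dF, smul_zero, Finset.sum_const_zero]
    simp only [Fin.sum_univ_succ, Finset.univ_eq_empty, Finset.sum_empty]
    simp only [Fin.val_zero, pow_zero, one_smul, add_zero, sub_zero]
    congr 2
  | succ n ih =>
    have h1 : (Fin.cons (z 0).2 (fun k : Fin (n+1) => (z k.succ).2) : Fin (n+2) → α)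
      = (fun k => (z k).2) := by
      funext k; refine Fin.cases ?_ (fun k => ?_) k <;> simp
    have h2 : (Fin.cons (z 0).1 (fun k : Fin (n+1) => (z k.succ).1) : Fin (n+2) → α)
      = (fun k => (z k).1) := by
      funext k; refine Fin.cases ?_ (fun k => ?_) k <;> simp
    have key := ih (fun l => c (Fin.cons (z 0).1 l)) (Fin.tail z)
    have e1 : prism (n + 2) (dF (n + 2) c) z =
      dF (n + 2) c (Fin.cons (z 0).1 (Fin.cons (z 0).2 (fun k => (z k.succ).2))) -
      (prism (n + 1) c (Fin.tail z) -
        prism (n + 1) (dF (n + 1) (fun l => c (Fin.cons (z 0).1 l))) (Fin.tail z)) := by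
      rw [← prism_sub]
      rw [prism]
      congr 2
      funext l
      rw [dF_succ]
      simp
    have e2 : dF (n + 1) (prism (n + 1) c) z = prism (n + 1) c (Fin.tail z) -
      (dF n (fun l => c (Fin.cons (z 0).1 (Fin.cons (z 0).2 l))) (fun k => (z k.succ).2)
        - dF n (prism n (fun l => c (Fin.cons (z 0).1 l))) (Fin.tail z)) := by
      rw [dF_succ]
      congr 1
      simp only [prism, dF_sub, Fin.cons_zero, Fin.cons_succ, Fin.tail_cons]
      rfl
    have e3 : dF (n + 2) c (Fin.cons (z 0).1 (Fin.cons (z 0).2 (fun k => (z k.succ).2))) =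
      c (Fin.cons (z 0).2 (fun k => (z k.succ).2)) -
       (c (Fin.cons (z 0).1 (fun k => (z k.succ).2)) -
        dF n (fun l => c (Fin.cons (z 0).1 (Fin.cons (z 0).2 l))) (fun k => (z k.succ).2)) := by
      rw [dF_succ, dF_succ]
      simp
    rw [e1, e2, e3, h1]
    have h2' : c (Fin.cons (z 0).1 (fun k : Fin (n+1) => (Fin.tail z k).1)) =
      c (fun k => (z k).1) := by rw [← h2]; rfl
    simp only [h2'] at key
    have h3 : c (Fin.cons (z 0).1 (fun k : Fin (n+1) => (Fin.tail z k).2)) =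
      c (Fin.cons (z 0).1 (fun k : Fin (n+1) => (z k.succ).2)) := rfl
    simp only [h3] at key
    have := sub_eq_zero.mpr key
    rw [← sub_eq_zero, ← this]
    abel

lemma prism_map {α E : Type*} [AddCommGroup E] (s : α → α) (T : E →+ E) (n : ℕ)
    (c c' : (Fin (n + 1) → α) → E) (h : ∀ l, c' (fun k => s (l k)) = T (c l))
    (z : Fin n → α × α) :
    prism n c' (fun k => (s (z k).1, s (z k).2)) = T (prism n c z) := by
  induction n with
  | zero => simp [prism]
  | succ n ih =>
    have aux : ∀ (m : ℕ) (a : α) (l : Fin m → α),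
      (Fin.cons (s a) (fun k => s (l k)) : Fin (m+1) → α) =
        fun k => s ((Fin.cons a l : Fin (m+1) → α) k) := by
      intro m a l
      funext k; refine Fin.cases ?_ (fun k => ?_) k <;> simp
    simp only [prism, map_sub]
    congr 1
    · rw [← h]
      congr 1
      rw [← aux, ← aux]
    · apply ih (fun l => c (Fin.cons (z 0).1 l)) (fun l => c' (Fin.cons (s (z 0).1) l))
        _ (Fin.tail z)
      intro l
      rw [← h, aux]

lemma prism_bound {α E : Type*} [NormedAddCommGroup E] (C : ℝ) (n : ℕ)
    (c : (Fin (n + 1) → α) → E) (h : ∀ l, ‖c l‖ ≤ C)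
    (z : Fin n → α × α) : ‖prism n c z‖ ≤ n * C := by
  induction n with
  | zero => simp [prism]
  | succ n ih =>
    simp only [prism]
    have := norm_sub_le (c (Fin.cons (z 0).1 (Fin.cons (z 0).2 (fun k => (z k.succ).2))))
      (prism n (fun l => c (Fin.cons (z 0).1 l)) (Fin.tail z))
    have h1 := h (Fin.cons (z 0).1 (Fin.cons (z 0).2 (fun k => (z k.succ).2)))
    have h2 := ih (fun l => c (Fin.cons (z 0).1 l)) (fun l => h _) (Fin.tail z)
    push_cast
    linarith

/-- bridge between the inhomogeneous and homogeneous differentials -/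
lemma bddDelta_eq_dF {G : Type*} [Group G] {E : Type*} [NormedAddCommGroup E] [Module ℝ E]
    (π : G → E → E) (n : ℕ) (c : (Fin (n + 1) → G) → E)
    (hc : ∀ (h : G) (l : Fin (n + 1) → G), c (fun k => h * l k) = π h (c l))
    (g : Fin (n + 1) → G) :
    bddDelta π n (fun x => c (Fin.partialProd x)) g = dF (n + 1) c (Fin.partialProd g) := by
  unfold bddDelta dF
  rw [Fin.sum_univ_succ, Fin.sum_univ_castSucc, ← add_assoc]
  have key : ∀ a : Fin (n + 1), (fun k => Fin.partialProd g (a.succ.succAbove k)) =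
    Fin.partialProd (Fin.contractNth a (· * ·) g) := by
    intro a; rw [Fin.partialProd_contractNth]; rfl
  congr 1
  · congr 1
    · rw [← hc]
      simp only [Fin.val_zero, pow_zero, one_smul, Fin.zero_succAbove]
      congr 1
      funext k
      rw [Fin.partialProd_succ']
      rfl
    · refine Finset.sum_congr rfl fun i _ => ?_
      rw [key]
      congr 1
  · rw [key]
    congr 1
    congr 2
    funext j
    simp [Fin.contractNth]

end SelfSim

namespace SelfSim
open Filter Topology MeasureTheory

/-- weak star ultralimits -/
lemma exists_ulim {ι F : Type*} [NormedAddCommGroup F] [NormedSpace ℝ F] (U : Ultrafilter ι)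
    (e : ι → (F →L[ℝ] ℝ)) (C : ℝ) (h : ∀ i, ‖e i‖ ≤ C) :
    ∃ a : F →L[ℝ] ℝ, ‖a‖ ≤ C ∧ ∀ v, Tendsto (fun i => e i v) U (𝓝 (a v)) := by
  have hK := WeakDual.isCompact_closedBall (𝕜 := ℝ) (E := F) 0 C
  obtain ⟨a, ha, hlim⟩ := hK.ultrafilter_le_nhds
    (U.map (fun i => StrongDual.toWeakDual (e i))) (by
      simp only [le_principal_iff]
      apply Filter.mem_map.mpr
      filter_upwards with i
      simp [h i])
  refine ⟨WeakDual.toStrongDual a, ?_, fun v => ?_⟩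
  · simpa using ha
  · have h1 : Tendsto (fun i => StrongDual.toWeakDual (e i)) U (𝓝 a) := hlim
    exact ((WeakDual.eval_continuous v).tendsto a).comp h1

lemma exists_hilbert_ulim {ι H : Type*} [NormedAddCommGroup H] [InnerProductSpace ℝ H]
    [CompleteSpace H] (U : Ultrafilter ι) (u : ι → H) (C : ℝ) (h : ∀ i, ‖u i‖ ≤ C) :
    ∃ a : H, ∀ v, Tendsto (fun i => inner ℝ (u i) v) U (𝓝 (inner ℝ a v)) := by
  obtain ⟨a, -, ha⟩ := exists_ulim U (fun i => InnerProductSpace.toDual ℝ H (u i)) C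
    (fun i => by simpa using h i)
  refine ⟨(InnerProductSpace.toDual ℝ H).symm a, fun v => ?_⟩
  simpa using ha v

lemma exists_functional {F : Type*} [NormedAddCommGroup F] [NormedSpace ℝ F]
    (C : ℝ) (v : ℕ → F) (α : ℕ → ℝ)
    (h : ∀ (K : ℕ) (q : Fin K → ℚ), |∑ k, (q k : ℝ) * α k| ≤ C * ‖∑ k, (q k : ℝ) • v k‖) :
    ∃ e : F →L[ℝ] ℝ, ∀ k, e (v k) = α k := by
  have h1 : ∀ (K : ℕ) (r : Fin K → ℝ), |∑ k, r k * α k| ≤ C * ‖∑ k, r k • v k‖ := by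
    intro K
    have hcl : IsClosed {r : Fin K → ℝ | |∑ k, r k * α k| ≤ C * ‖∑ k, r k • v k‖} := by
      apply isClosed_le <;> fun_prop
    have hd : DenseRange (fun (q : Fin K → ℚ) (k : Fin K) => (q k : ℝ)) :=
      DenseRange.piMap (fun _ => Rat.denseRange_cast)
    intro r
    have hsub : Set.range (fun (q : Fin K → ℚ) (k : Fin K) => (q k : ℝ)) ⊆
        {r : Fin K → ℝ | |∑ k, r k * α k| ≤ C * ‖∑ k, r k • v k‖} := by
      rintro _ ⟨q, rfl⟩
      exact h K q
    exact (hcl.closure_subset_iff.mpr hsub) (hd r)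
  let L : (ℕ →₀ ℝ) →ₗ[ℝ] F := Finsupp.linearCombination ℝ v
  let A : (ℕ →₀ ℝ) →ₗ[ℝ] ℝ := Finsupp.linearCombination ℝ α
  have h2 : ∀ r, |A r| ≤ C * ‖L r‖ := by
    intro r
    obtain ⟨K, hK⟩ : ∃ K, r.support ⊆ Finset.range K :=
      ⟨r.support.sup id + 1, fun k hk => Finset.mem_range.mpr
        (Nat.lt_succ_of_le (Finset.le_sup (f := id) hk))⟩
    have := h1 K (fun k => r k)
    rw [Finset.sum_fin_eq_sum_range, Finset.sum_fin_eq_sum_range] at this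
    have eA : A r = ∑ k ∈ Finset.range K, r k * α k := by
      simp only [A, Finsupp.linearCombination_apply]
      rw [Finsupp.sum_of_support_subset _ hK] <;> simp
    have eL : L r = ∑ k ∈ Finset.range K, r k • v k := by
      simp only [L, Finsupp.linearCombination_apply]
      rw [Finsupp.sum_of_support_subset _ hK] ; simp
    rw [eA, eL]
    convert this using 2
    · refine (Finset.sum_congr rfl fun k hk => ?_)
      simp [Finset.mem_range.mp hk]
    · refine congrArg norm (Finset.sum_congr rfl fun k hk => ?_)
      simp [Finset.mem_range.mp hk]
  obtain ⟨s, hs⟩ := L.rangeRestrict.exists_rightInverse_of_surjective (LinearMap.range_rangeRestrict L)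
  have hs' : ∀ w : LinearMap.range L, L (s w) = w := fun w => by
    have := LinearMap.congr_fun hs w
    simpa using congrArg Subtype.val this
  let f : LinearMap.range L →L[ℝ] ℝ := LinearMap.mkContinuous (A ∘ₗ s) C (fun w => by
    have := h2 (s w)
    rw [hs'] at this
    simpa using this)
  obtain ⟨e, he, -⟩ := _root_.exists_extension_norm_eq (LinearMap.range L) f
  refine ⟨e, fun k => ?_⟩
  have hL : L (Finsupp.single k 1) = v k := by simp [L]
  have hA : A (Finsupp.single k 1) = α k := by simp [A]
  have h3 := he ⟨v k, ⟨_, hL⟩⟩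
  simp only at h3
  rw [h3]
  change A (s ⟨v k, _⟩) = α k
  have h4 := h2 (s ⟨v k, ⟨_, hL⟩⟩ - Finsupp.single k 1)
  rw [map_sub, map_sub, hs', hL, hA] at h4
  simp only [sub_self, norm_zero, mul_zero, abs_nonpos_iff] at h4
  linarith

lemma exists_weakCauchy_subseq {F : Type*} [NormedAddCommGroup F] [NormedSpace ℝ F]
    (hsep : TopologicalSpace.SeparableSpace (F →L[ℝ] ℝ)) (v : ℕ → F) (R : ℝ)
    (hv : ∀ k, ‖v k‖ ≤ R) :
    ∃ σ : ℕ → ℕ, StrictMono σ ∧ ∀ e : F →L[ℝ] ℝ, CauchySeq (fun i => e (v (σ i))) := by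
  let d := TopologicalSpace.denseSeq (F →L[ℝ] ℝ)
  have hR : 0 ≤ R := (norm_nonneg _).trans (hv 0)
  have hK : IsCompact (Set.univ.pi (fun j : ℕ => Set.Icc (-(‖d j‖ * R)) (‖d j‖ * R))) :=
    isCompact_univ_pi fun j => isCompact_Icc
  obtain ⟨a, -, σ, hσ, hlim⟩ := hK.tendsto_subseq (x := fun k j => d j (v k)) (by
    intro k j _
    rw [Set.mem_Icc, ← abs_le, ← Real.norm_eq_abs]
    exact ((d j).le_opNorm _).trans (by gcongr; exact hv k))
  refine ⟨σ, hσ, fun e => ?_⟩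
  rw [Metric.cauchySeq_iff']
  intro ε hε
  obtain ⟨j, hj⟩ : ∃ j, ‖e - d j‖ < ε / (3 * (R + 1)) := by
    have := (TopologicalSpace.denseRange_denseSeq (F →L[ℝ] ℝ)).exists_dist_lt e
      (ε := ε / (3 * (R + 1))) (by positivity)
    simpa [dist_eq_norm] using this
  have hc : CauchySeq (fun i => d j (v (σ i))) :=
    (((continuous_apply j).tendsto a).comp hlim).cauchySeq
  obtain ⟨N, hN⟩ := Metric.cauchySeq_iff'.mp hc (ε / 3) (by positivity)
  refine ⟨N, fun n hn => ?_⟩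
  have hN := hN n hn
  have hb : ∀ k, |(e - d j) (v k)| ≤ ε / 3 := by
    intro k
    calc |(e - d j) (v k)| ≤ ‖e - d j‖ * ‖v k‖ := (e - d j).le_opNorm _
      _ ≤ ε / (3 * (R + 1)) * (R + 1) := by
        gcongr
        linarith [hv k]
      _ = ε / 3 := by field_simp
  have b1 := hb (σ n)
  have b2 := hb (σ N)
  simp only [sub_apply] at b1 b2
  rw [Real.dist_eq, abs_lt] at *
  rw [abs_le] at b1 b2
  constructor <;> linarith [b1.1, b1.2, b2.1, b2.2, hN.1, hN.2]

end SelfSim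

namespace SelfSim
open Filter Topology MeasureTheory

lemma tendsto_inner_zero {H : Type*} [NormedAddCommGroup H] [InnerProductSpace ℝ H]
    (f : ℕ → H) (s : ℝ) (hf : ∀ j k, inner ℝ (f j) (f k) = if j = k then s else 0) (x : H) :
    Tendsto (fun k => inner ℝ (f k) x) atTop (𝓝 0) := by
  have hs : 0 ≤ s := by
    have := hf 0 0
    simp only [if_true] at this
    rw [← this]; exact real_inner_self_nonneg
  rcases hs.eq_or_lt with h0 | h0
  · have : ∀ k, f k = 0 := fun k => by
      have := hf k k
      rw [if_pos rfl, ← h0] at this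
      exact inner_self_eq_zero.mp this
    simp [this]
  · have ho : Orthonormal ℝ (fun k => (√s)⁻¹ • f k) := by
      rw [orthonormal_iff_ite]
      intro i j
      rw [inner_smul_left, inner_smul_right, hf]
      split_ifs
      · have : √s * √s = s := Real.mul_self_sqrt hs
        have h1 : √s ≠ 0 := (Real.sqrt_pos.mpr h0).ne'
        simp only [conj_trivial]
        field_simp
        nlinarith
      · simp
    have h1 := (ho.inner_products_summable (x := x)).tendsto_atTop_zero
    have h2 : Tendsto (fun k => inner ℝ ((√s)⁻¹ • f k) x) atTop (𝓝 0) := by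
      have h3 := (h1.sqrt)
      simp only [Real.sqrt_zero] at h3
      refine squeeze_zero_norm (fun k => ?_) h3
      rw [Real.sqrt_sq (norm_nonneg _)]
    have h3 := h2.const_mul (√s)
    simp only [inner_smul_left, mul_zero, conj_trivial] at h3
    refine h3.congr fun k => ?_
    have h1 : √s ≠ 0 := (Real.sqrt_pos.mpr h0).ne'
    field_simp

lemma key_analytic {Ω : Type*} [MeasurableSpace Ω] (μ : Measure Ω) [IsProbabilityMeasure μ]
    {F : Type*} [NormedAddCommGroup F] [NormedSpace ℝ F]
    (hsep : TopologicalSpace.SeparableSpace (F →L[ℝ] ℝ)) (U : Ultrafilter ℕ)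
    (c : ℕ → Ω → (F →L[ℝ] ℝ)) (C : ℝ) (hc : ∀ N x, ‖c N x‖ ≤ C)
    (hm : ∀ N v, Measurable (fun x => c N x v))
    (φ : ℕ → Ω → ℝ) (hφm : ∀ k, Measurable (φ k)) (M : ℝ) (hφ : ∀ k x, |φ k x| ≤ M) (s : ℝ)
    (horth : ∀ j k, ∫ x, φ j x * φ k x ∂μ = if j = k then s else 0)
    (v : ℕ → F) (R : ℝ) (hv : ∀ k, ‖v k‖ ≤ R) (θ : ℝ)
    (hθ : ∀ k, Tendsto (fun N => ∫ x, φ k x * c N x (v k) ∂μ) U (𝓝 θ)) : θ = 0 := by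
  have hR : 0 ≤ R := (norm_nonneg _).trans (hv 0)
  obtain ⟨x₀⟩ : Nonempty Ω := μ.nonempty_of_neZero
  have hC : 0 ≤ C := (norm_nonneg _).trans (hc 0 x₀)
  have hM : 0 ≤ M := (abs_nonneg _).trans (hφ 0 x₀)
  have hcv : ∀ N x w, ‖c N x w‖ ≤ C * ‖w‖ := fun N x w =>
    ((c N x).le_opNorm w).trans (by gcongr; exact hc N x)
  have hmem : ∀ N w, MemLp (fun x => c N x w) 2 μ := fun N w =>
    MemLp.of_bound (hm N w).aestronglyMeasurable (C * ‖w‖) (ae_of_all _ fun x => hcv N x w)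
  have hφmem : ∀ k, MemLp (φ k) 2 μ := fun k =>
    MemLp.of_bound (hφm k).aestronglyMeasurable M (ae_of_all _ fun x => hφ k x)
  -- weak limits in L²
  have hex : ∀ k, ∃ h : Lp ℝ 2 μ, ∀ ψ : Lp ℝ 2 μ,
      Tendsto (fun N => inner ℝ ((hmem N (v k)).toLp) ψ) U (𝓝 (inner ℝ h ψ)) := fun k =>
    exists_hilbert_ulim U (fun N => (hmem N (v k)).toLp) _ (fun N =>
      Lp.norm_le_of_ae_bound (C := C * ‖v k‖) (by positivity) (by
        filter_upwards [(hmem N (v k)).coeFn_toLp] with x hx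
        rw [hx]; exact hcv N x _))
  choose h hh using hex
  have hlim : ∀ k (ψ : Ω → ℝ), MemLp ψ 2 μ →
      Tendsto (fun N => ∫ x, ψ x * c N x (v k) ∂μ) U (𝓝 (∫ x, ψ x * h k x ∂μ)) := by
    intro k ψ hψ
    have := hh k hψ.toLp
    simp only [L2.inner_def] at this
    refine (this.congr fun N => ?_).trans (le_of_eq (congrArg 𝓝 ?_))
    · refine integral_congr_ae ?_
      filter_upwards [(hmem N (v k)).coeFn_toLp, hψ.coeFn_toLp] with x hx hx'
      rw [hx, hx']; simp
    · refine integral_congr_ae ?_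
      filter_upwards [hψ.coeFn_toLp] with x hx'
      rw [hx']; simp
  have hhmem : ∀ k, MemLp (h k) 2 μ := fun k => Lp.memLp (h k)
  have hhI : ∀ k, Integrable (h k) μ := fun k => (hhmem k).integrable (by norm_num)
  have hub : ∀ (K : ℕ) (q : Fin K → ℚ), ∀ᵐ x ∂μ,
      ∑ k, (q k : ℝ) * h k x ≤ C * ‖∑ k, (q k : ℝ) • v k‖ := by
    intro K q
    refine ae_le_of_forall_setIntegral_le
      (integrable_finsetSum _ fun k _ => (hhI k).const_mul _) (integrable_const _) ?_
    intro A hA _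
    let ψ : Ω → ℝ := A.indicator (fun _ => 1)
    have hψ : MemLp ψ 2 μ := memLp_indicator_const 2 hA 1 (Or.inr (measure_ne_top _ _))
    have hψi : ∀ k, Integrable (fun x => ψ x * h k x) μ := fun k => hψ.integrable_mul (hhmem k)
    have hψi' : ∀ N w, Integrable (fun x => ψ x * c N x w) μ := fun N w =>
      hψ.integrable_mul (hmem N w)
    have e1 : ∫ x in A, ∑ k, (q k : ℝ) * h k x ∂μ = ∑ k, (q k : ℝ) * ∫ x, ψ x * h k x ∂μ := by
      rw [← integral_indicator hA]
      simp_rw [← integral_const_mul]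
      rw [← integral_finsetSum _ (fun (k : Fin K) _ => (hψi k).const_mul (q k : ℝ))]
      congr 1
      funext x
      by_cases hx : x ∈ A <;> simp [ψ, hx]
    have hl : Tendsto (fun N => ∑ k : Fin K, (q k : ℝ) * ∫ x, ψ x * c N x (v k) ∂μ) U
        (𝓝 (∑ k, (q k : ℝ) * ∫ x, ψ x * h k x ∂μ)) :=
      tendsto_finsetSum _ fun k _ => (hlim k ψ hψ).const_mul _
    rw [e1]
    refine le_of_tendsto' hl fun N => ?_
    have e2 : ∑ k : Fin K, (q k : ℝ) * ∫ x, ψ x * c N x (v k) ∂μ =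
      ∫ x, ψ x * c N x (∑ k : Fin K, (q k : ℝ) • v k) ∂μ := by
      simp_rw [← integral_const_mul]
      rw [← integral_finsetSum _ (fun k _ => (hψi' N _).const_mul _)]
      congr 1
      funext x
      rw [map_sum, Finset.mul_sum]
      refine Finset.sum_congr rfl fun k _ => ?_
      rw [map_smul, smul_eq_mul]; ring
    rw [e2, ← integral_indicator hA]
    refine integral_mono (hψi' N _) ((integrable_const _).indicator hA) fun x => ?_
    by_cases hx : x ∈ A
    · simp only [ψ, hx, Set.indicator_of_mem, one_mul]
      exact (le_abs_self _).trans (hcv N x _)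
    · simp [ψ, hx]
  have habs : ∀ᵐ x ∂μ, ∀ (K : ℕ) (q : Fin K → ℚ),
      |∑ k, (q k : ℝ) * h k x| ≤ C * ‖∑ k, (q k : ℝ) • v k‖ := by
    rw [ae_all_iff]; intro K
    rw [ae_all_iff]; intro q
    filter_upwards [hub K q, hub K (-q)] with x h1 h2
    rw [abs_le]
    refine ⟨?_, h1⟩
    simp only [Pi.neg_apply, Rat.cast_neg, neg_mul, Finset.sum_neg_distrib, neg_smul,
      norm_neg] at h2
    linarith
  have hhb : ∀ᵐ x ∂μ, ∀ k, |h k x| ≤ C * R := by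
    filter_upwards [habs] with x hx k
    have := hx (k + 1) (Pi.single (Fin.last k) 1)
    rw [Finset.sum_eq_single (Fin.last k), Finset.sum_eq_single (Fin.last k)] at this
    · simp only [Pi.single_eq_same, Rat.cast_one, one_mul, one_smul, Fin.val_last] at this
      exact this.trans (by gcongr; exact hv k)
    all_goals simp +contextual
  obtain ⟨σ, hσ, hσc⟩ := exists_weakCauchy_subseq hsep v R hv
  have hconv : ∀ᵐ x ∂μ, ∃ l, Tendsto (fun i => h (σ i) x) atTop (𝓝 l) := by
    filter_upwards [habs] with x hx
    obtain ⟨e, he⟩ := exists_functional C v (fun k => h k x) hx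
    apply cauchySeq_tendsto_of_complete
    simpa [he] using hσc e
  obtain ⟨g, hgm, hg⟩ := measurable_limit_of_tendsto_metrizable_ae
    (fun i => (hhI (σ i)).aestronglyMeasurable.aemeasurable) hconv
  have hgb : ∀ᵐ x ∂μ, ‖g x‖ ≤ C * R := by
    filter_upwards [hg, hhb] with x h1 h2
    exact le_of_tendsto' h1.norm fun i => h2 _
  have hgmem : MemLp g 2 μ := MemLp.of_bound hgm.aestronglyMeasurable _ hgb
  -- dominated convergence
  have hdct : Tendsto (fun i => ∫ x, M * |h (σ i) x - g x| ∂μ) atTop (𝓝 0) := by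
    have := tendsto_integral_of_dominated_convergence (μ := μ) (f := fun _ => (0 : ℝ))
      (F := fun i x => M * |h (σ i) x - g x|) (fun _ => M * (C * R + C * R))
      (fun i => (((hhI (σ i)).sub (hgmem.integrable (by norm_num))).abs.const_mul
        M).aestronglyMeasurable)
      (integrable_const _) (by
        intro i
        filter_upwards [hhb, hgb] with x h1 h2
        rw [Real.norm_eq_abs, abs_mul, abs_abs, abs_of_nonneg hM]
        gcongr
        exact (abs_sub _ _).trans (add_le_add (h1 _) h2)) (by
        filter_upwards [hg] with x hx
        have := ((hx.sub_const (g x)).abs).const_mul M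
        simpa using this)
    simpa using this
  have hbessel : Tendsto (fun k => ∫ x, φ k x * g x ∂μ) atTop (𝓝 0) := by
    have := tendsto_inner_zero (fun k => (hφmem k).toLp) s (by
      intro j k
      rw [← horth j k, L2.inner_def]
      refine integral_congr_ae ?_
      filter_upwards [(hφmem j).coeFn_toLp, (hφmem k).coeFn_toLp] with x h1 h2
      rw [h1, h2]; simp [mul_comm]) hgmem.toLp
    refine this.congr fun k => ?_
    rw [L2.inner_def]
    refine integral_congr_ae ?_
    filter_upwards [(hφmem k).coeFn_toLp, hgmem.coeFn_toLp] with x h1 h2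
    rw [h1, h2]; simp [mul_comm]
  have hθ' : ∀ k, θ = ∫ x, φ k x * h k x ∂μ := fun k =>
    tendsto_nhds_unique (hθ k) (hlim k (φ k) (hφmem k))
  have hfin : Tendsto (fun i => |∫ x, φ (σ i) x * g x ∂μ| + ∫ x, M * |h (σ i) x - g x| ∂μ)
      atTop (𝓝 0) := by
    have := ((hbessel.comp hσ.tendsto_atTop).abs).add hdct
    simpa using this
  have : |θ| ≤ 0 := by
    refine ge_of_tendsto' hfin fun i => ?_
    rw [hθ' (σ i)]
    have i1 : Integrable (fun x => φ (σ i) x * h (σ i) x) μ := (hφmem _).integrable_mul (hhmem _)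
    have i2 : Integrable (fun x => φ (σ i) x * g x) μ := (hφmem _).integrable_mul hgmem
    have i3 : Integrable (fun x => φ (σ i) x * (h (σ i) x - g x)) μ :=
      (i1.sub i2).congr (ae_of_all _ fun x => by simp [mul_sub])
    have e : ∫ x, φ (σ i) x * h (σ i) x ∂μ = ∫ x, φ (σ i) x * g x ∂μ +
        ∫ x, φ (σ i) x * (h (σ i) x - g x) ∂μ := by
      rw [← integral_add i2 i3]
      congr 1; funext x; ring
    rw [e]
    refine (abs_add_le _ _).trans (add_le_add_right ?_ _)
    refine (abs_integral_le_integral_abs).trans ?_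
    refine integral_mono i3.abs
      (((hhI (σ i)).sub (hgmem.integrable (by norm_num))).abs.const_mul M) fun x => ?_
    simp only [abs_mul]
    gcongr
    exact hφ _ x
  exact abs_nonpos_iff.mp this

end SelfSim

namespace SelfSim
open Filter Topology MeasureTheory

section Prob

lemma infinitePi_map_inj {ι ι' X : Type*} [MeasurableSpace X] (κ : Measure X)
    [IsProbabilityMeasure κ] (f : ι' → ι) (hf : Function.Injective f) :
    MeasurePreserving (fun (x : ι → X) (i : ι') => x (f i))
      (Measure.infinitePi (fun _ : ι => κ)) (Measure.infinitePi (fun _ : ι' => κ)) := by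
  have hm : Measurable (fun (x : ι → X) (i : ι') => x (f i)) := by fun_prop
  refine ⟨hm, Measure.eq_infinitePi _ fun s t ht => ?_⟩
  classical
  have ht' : ∀ i, MeasurableSet (Function.extend f t (fun _ => Set.univ) i) := by
    intro i
    by_cases h : ∃ j, f j = i
    · obtain ⟨j, rfl⟩ := h
      rw [hf.extend_apply]; exact ht j
    · rw [Function.extend_apply' _ _ _ h]; exact MeasurableSet.univ
  rw [Measure.map_apply hm (MeasurableSet.pi s.countable_toSet fun i _ => ht i)]
  have : (fun (x : ι → X) (i : ι') => x (f i)) ⁻¹' (Set.pi s t) =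
      Set.pi (s.map ⟨f, hf⟩ : Finset ι) (Function.extend f t (fun _ => Set.univ)) := by
    ext x
    simp [Set.mem_pi, hf.extend_apply]
  rw [this, Measure.infinitePi_pi _ (fun i _ => ht' i), Finset.prod_map]
  simp [hf.extend_apply]

lemma infinitePi_update {ι X : Type*} [DecidableEq ι] [MeasurableSpace X] (κ : Measure X)
    [IsProbabilityMeasure κ] (k : ι) :
    MeasurePreserving (fun (p : X × (ι → X)) => Function.update p.2 k p.1)
      (κ.prod (Measure.infinitePi (fun _ : ι => κ))) (Measure.infinitePi (fun _ : ι => κ)) := by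
  have hm : Measurable (fun (p : X × (ι → X)) => Function.update p.2 k p.1) := by
    rw [measurable_pi_iff]
    intro i
    by_cases h : i = k
    · subst h; simpa using measurable_fst
    · simp only [Function.update_of_ne h]; fun_prop
  refine ⟨hm, Measure.eq_infinitePi _ fun s t ht => ?_⟩
  rw [Measure.map_apply hm (MeasurableSet.pi s.countable_toSet fun i _ => ht i)]
  by_cases hk : k ∈ s
  · have : (fun (p : X × (ι → X)) => Function.update p.2 k p.1) ⁻¹' (Set.pi s t) =
        t k ×ˢ (Set.pi (s.erase k : Finset ι) t) := by
      ext ⟨b, x⟩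
      simp only [Set.mem_preimage, Set.mem_pi, Set.mem_prod, Finset.mem_coe, Finset.mem_erase]
      constructor
      · intro h
        refine ⟨by simpa using h k hk, fun i hi => ?_⟩
        simpa [hi.1] using h i hi.2
      · rintro ⟨h1, h2⟩ i hi
        by_cases h : i = k
        · subst h; simpa using h1
        · simpa [h] using h2 i ⟨h, hi⟩
    rw [this, Measure.prod_prod, Measure.infinitePi_pi _ (fun i _ => ht i),
      Finset.mul_prod_erase s (fun i => κ (t i)) hk]
  · have : (fun (p : X × (ι → X)) => Function.update p.2 k p.1) ⁻¹' (Set.pi s t) =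
        Set.univ ×ˢ (Set.pi s t) := by
      ext ⟨b, x⟩
      simp only [Set.mem_preimage, Set.mem_pi, Set.mem_prod, Finset.mem_coe, Set.mem_univ,
        true_and]
      refine forall₂_congr fun i hi => ?_
      have h : i ≠ k := fun h => hk (h ▸ hi)
      simp [h]
    rw [this, Measure.prod_prod, Measure.infinitePi_pi _ (fun i _ => ht i)]
    simp

lemma resample {A : Type*} [MeasurableSpace A] [MeasurableSingletonClass A] [DecidableEq A]
    (κ : Measure A) [IsProbabilityMeasure κ] (k : ℤ) (a : A) (H : (ℤ → A) → ℝ)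
    (hH : Measurable H) (M : ℝ) (hM : ∀ x, |H x| ≤ M) :
    ∫ x, (if x k = a then H x else 0) ∂(Measure.infinitePi (fun _ : ℤ => κ)) =
      κ.real {a} * ∫ x, H (Function.update x k a) ∂(Measure.infinitePi (fun _ : ℤ => κ)) := by
  have mp := infinitePi_update (ι := ℤ) κ k
  have hk : MeasurableSet {x : ℤ → A | x k = a} :=
    (measurableSet_singleton a).preimage (measurable_pi_apply (X := fun _ : ℤ => A) k)
  have hmeas : Measurable (fun x : ℤ → A => if x k = a then H x else 0) :=
    Measurable.ite hk hH measurable_const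
  have hbd : ∀ x : ℤ → A, ‖(if x k = a then H x else 0)‖ ≤ M := by
    intro x
    split_ifs
    · exact hM x
    · simpa using (abs_nonneg _).trans (hM x)
  rw [← mp.map_eq, integral_map mp.measurable.aemeasurable hmeas.aestronglyMeasurable,
    integral_prod]
  · rw [mp.map_eq]
    simp only [Function.update_self]
    have : ∀ b : A, ∫ x, (if b = a then H (Function.update x k b) else 0)
        ∂(Measure.infinitePi (fun _ : ℤ => κ)) =
        Set.indicator {a} (fun _ => ∫ x, H (Function.update x k a)
          ∂(Measure.infinitePi (fun _ : ℤ => κ))) b := by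
      intro b
      by_cases h : b = a
      · subst h; simp
      · simp [h]
    simp_rw [this]
    rw [integral_indicator_const _ (measurableSet_singleton a), smul_eq_mul]
  · exact Integrable.of_bound (hmeas.comp mp.measurable).aestronglyMeasurable M
      (ae_of_all _ fun p => hbd _)

/-- cylinder functions -/
def IsCyl {A β : Type*} (Φ : (ℤ → A) → β) : Prop :=
  ∃ W : Finset ℤ, ∀ x y : ℤ → A, (∀ p ∈ W, x p = y p) → Φ x = Φ y

lemma IsCyl.comp {A β β' : Type*} {Φ : (ℤ → A) → β} (h : IsCyl Φ) (f : β → β') :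
    IsCyl (fun x => f (Φ x)) := by
  obtain ⟨W, hW⟩ := h
  exact ⟨W, fun x y hxy => congrArg f (hW x y hxy)⟩

lemma IsCyl.update {A β : Type*} {Φ : (ℤ → A) → β} (h : IsCyl Φ) (k : ℤ) (a : A) :
    IsCyl (fun x => Φ (Function.update x k a)) := by
  obtain ⟨W, hW⟩ := h
  refine ⟨W, fun x y hxy => hW _ _ fun p hp => ?_⟩
  by_cases h : p = k
  · subst h; simp
  · simp [h, hxy p hp]

lemma IsCyl.stronglyMeasurable {A β : Type*} [Finite A] [MeasurableSpace A]
    [MeasurableSingletonClass A] [TopologicalSpace β]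
    {Φ : (ℤ → A) → β} (h : IsCyl Φ) : StronglyMeasurable Φ := by
  obtain ⟨W, hW⟩ := h
  rcases isEmpty_or_nonempty A with hA | ⟨⟨a₀⟩⟩
  · exact ⟨fun _ => SimpleFunc.ofFinite Φ, fun x => (hA.false (x 0)).elim⟩
  classical
  let Ψ : (W → A) → β := fun y => Φ (fun p => if h : p ∈ W then y ⟨p, h⟩ else a₀)
  have h1 : Φ = Ψ ∘ W.restrict := by
    funext x
    refine hW _ _ fun p hp => ?_
    simp [hp]
  rw [h1]
  have : StronglyMeasurable Ψ := StronglyMeasurable.of_discrete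
  exact this.comp_measurable (Finset.measurable_restrict W)

end Prob

section Dyn
variable {G : Type*} [Group G]

lemma list_pull {ι : Type*} (f f' : ι → G) (p : ι) (w : G) (h1 : f p = 1) (h2 : f' p = w)
    (h3 : ∀ q, q ≠ p → f' q = f q) (h4 : ∀ q, q ≠ p → Commute w (f q)) (L : List ι)
    (hL : L.Nodup) : p ∈ L → w * (L.map f).prod = (L.map f').prod := by
  induction L with
  | nil => simp
  | cons a L ih =>
    intro hp
    rw [List.nodup_cons] at hL
    simp only [List.map_cons, List.prod_cons]
    by_cases ha : a = p
    · subst ha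
      rw [h1, h2, one_mul]
      congr 2
      refine List.map_congr_left fun q hq => ?_
      exact (h3 q (fun h => hL.1 (h ▸ hq))).symm
    · have : p ∈ L := by
        rcases List.mem_cons.mp hp with h | h
        · exact absurd h.symm ha
        · exact h
      rw [← ih hL.2 this, h3 a ha, ← mul_assoc, (h4 a ha).eq, mul_assoc]

/-- product over the window `[-N, N)` -/
def winProd (γ : G) (N : ℕ) (z : ℤ → G) : G :=
  ((List.range (2 * N)).map (fun i : ℕ =>
    γ ^ ((i : ℤ) - N) * z ((i : ℤ) - N) * γ ^ (-((i : ℤ) - N)))).prod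

/-- the random group element -/
def xi (γ : G) (N t : ℕ) (z : ℤ → G) : G := γ ^ t * winProd γ N (fun p => z (p + t))

lemma xi_shift (γ : G) (N t : ℕ) (z : ℤ → G) :
    γ * xi γ N t z = xi γ N (t + 1) (fun p => z (p - 1)) := by
  unfold xi
  rw [← mul_assoc, ← pow_succ']
  congr 2
  funext p
  congr 1
  push_cast
  ring

lemma xi_pull (γ : G) (N t : ℕ) (ht : t < N) (z : ℤ → G) (w : G)
    (hcomm : ∀ q : ℤ, q ≠ 0 → Commute w (γ ^ q * z q * γ ^ (-q))) :
    w * xi γ N t (Function.update z 0 1) = xi γ N t (Function.update z 0 w) := by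
  unfold xi winProd
  have e : w * γ ^ t = γ ^ t * (γ ^ (-(t : ℤ)) * w * γ ^ (t : ℤ)) := by
    simp [mul_assoc]
  rw [← mul_assoc, e, mul_assoc]
  congr 1
  have hne : ∀ q : ℕ, q ≠ N - t → ((q : ℤ) - N + t) ≠ 0 := by
    intro q hq h; apply hq; omega
  apply list_pull _ _ (N - t)
  · have : (((N - t : ℕ) : ℤ) - N + t) = 0 := by omega
    simp only [this, Function.update_self]
    rw [mul_one, ← zpow_add, add_neg_cancel, zpow_zero]
  · have : (((N - t : ℕ) : ℤ) - N + t) = 0 := by omega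
    have h2 : (((N - t : ℕ) : ℤ) - N) = -t := by omega
    simp only [this, Function.update_self]
    rw [h2, neg_neg]
  · intro q hq
    simp [hne q hq]
  · intro q hq
    simp only [Function.update_of_ne (hne q hq)]
    have := hcomm _ (hne q hq)
    have h2 := (Commute.conj_iff (γ ^ (-(t : ℤ)))).mpr this
    convert h2 using 1
    · simp
    · group
  · exact List.nodup_range
  · simp; omega

lemma xi_cyl {A : Type*} (γ : G) (N t : ℕ) {m : ℕ} (f : A → Fin m → G) :
    IsCyl (fun x : ℤ → A => fun l => xi γ N t (fun p => f (x p) l)) := by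
  refine ⟨(Finset.range (2 * N)).image (fun i : ℕ => (i : ℤ) - N + t), fun x y hxy => ?_⟩
  funext l
  unfold xi winProd
  refine congrArg (fun L => γ ^ t * List.prod L) (List.map_congr_left fun i hi => ?_)
  have := hxy ((i : ℤ) - N + t) (Finset.mem_image_of_mem _ (by simpa using hi))
  simp only [this]

lemma xi_cyl_update {A : Type*} (γ : G) (N t : ℕ) {m : ℕ} (f : A → Fin m → G) :
    IsCyl (fun x : ℤ → A => fun l => xi γ N t (Function.update (fun p => f (x p) l) 0 1)) := by
  refine ⟨(Finset.range (2 * N)).image (fun i : ℕ => (i : ℤ) - N + t), fun x y hxy => ?_⟩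
  funext l
  unfold xi winProd
  refine congrArg (fun L => γ ^ t * List.prod L) (List.map_congr_left fun i hi => ?_)
  have := hxy ((i : ℤ) - N + t) (Finset.mem_image_of_mem _ (by simpa using hi))
  simp only [Function.update_apply, this]

end Dyn
end SelfSim

namespace SelfSim
open Filter Topology MeasureTheory

section Core
variable {G : Type*} [Group G] {F : Type*} [NormedAddCommGroup F] [NormedSpace ℝ F]

/-- the averaged random cochain -/
noncomputable def CN {A : Type*} {m : ℕ} (γ : G) (f : A → Fin m → G) (c : (Fin m → G) → (F →L[ℝ] ℝ))
    (N : ℕ) (x : ℤ → A) : F →L[ℝ] ℝ :=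
  (N : ℝ)⁻¹ • ∑ t ∈ Finset.range N, c (fun l => xi γ N t (fun p => f (x p) l))

lemma avg_bound {V : Type*} [NormedAddCommGroup V] [NormedSpace ℝ V] (N : ℕ) (e : ℕ → V) (C : ℝ)
    (hC : 0 ≤ C) (h : ∀ t, ‖e t‖ ≤ C) : ‖(N : ℝ)⁻¹ • ∑ t ∈ Finset.range N, e t‖ ≤ C := by
  rw [norm_smul, norm_inv, Real.norm_natCast]
  have h1 : ‖∑ t ∈ Finset.range N, e t‖ ≤ N * C := by
    refine (norm_sum_le _ _).trans ?_
    refine (Finset.sum_le_sum fun t _ => h t).trans ?_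
    simp
  rcases Nat.eq_zero_or_pos N with h0 | h0
  · subst h0; simpa using hC
  · have : (0 : ℝ) < N := by exact_mod_cast h0
    rw [inv_mul_le_iff₀ this]
    exact h1

lemma CN_bound {A : Type*} {m : ℕ} (γ : G) (f : A → Fin m → G) (c : (Fin m → G) → (F →L[ℝ] ℝ))
    (C : ℝ) (hc : ∀ l, ‖c l‖ ≤ C) (N : ℕ) (x : ℤ → A) : ‖CN γ f c N x‖ ≤ C :=
  avg_bound N _ C ((norm_nonneg _).trans (hc fun _ => 1)) fun _ => hc _

lemma CN_cyl {A : Type*} {m : ℕ} (γ : G) (f : A → Fin m → G) (c : (Fin m → G) → (F →L[ℝ] ℝ))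
    (N : ℕ) : IsCyl (CN γ f c N) := by
  choose W hW using fun t => xi_cyl γ N t f
  refine ⟨(Finset.range N).biUnion W, fun x y hxy => ?_⟩
  unfold CN
  congr 1
  refine Finset.sum_congr rfl fun t ht => ?_
  congr 1
  exact hW t x y fun p hp => hxy p (Finset.mem_biUnion.mpr ⟨t, ht, hp⟩)

lemma CN_shift {A : Type*} {m : ℕ} (ρ : G →* (F ≃ₗᵢ[ℝ] F)) (γ : G) (f : A → Fin m → G)
    (c : (Fin m → G) → (F →L[ℝ] ℝ)) (C : ℝ) (hc : ∀ l, ‖c l‖ ≤ C)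
    (heq : ∀ (h : G) (l : Fin m → G), c (fun k => h * l k) = contragredient ρ h (c l))
    (N : ℕ) (x : ℤ → A) (v : F) :
    |CN γ f c N x v - CN γ f c N (fun p => x (p - 1)) (ρ γ v)| ≤ (N : ℝ)⁻¹ * (2 * C * ‖v‖) := by
  have h1 : ∀ t, c (fun l => xi γ N t (fun p => f (x p) l)) v =
      c (fun l => xi γ N (t + 1) (fun p => f (x (p - 1)) l)) (ρ γ v) := by
    intro t
    have h2 : (fun l => xi γ N (t + 1) (fun p => f (x (p - 1)) l)) =
        fun l => γ * xi γ N t (fun p => f (x p) l) := by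
      funext l
      rw [xi_shift]
    rw [h2, heq]
    have : ρ γ⁻¹ (ρ γ v) = v := by
      have h3 : (ρ γ⁻¹ * ρ γ) v = v := by rw [← map_mul]; simp
      exact h3
    rw [show contragredient ρ γ (c fun l => xi γ N t (fun p => f (x p) l)) (ρ γ v) =
      c (fun l => xi γ N t (fun p => f (x p) l)) (ρ γ⁻¹ (ρ γ v)) from rfl, this]
  unfold CN
  simp only [smul_apply, sum_apply,
    smul_eq_mul, ← mul_sub]
  rw [Finset.sum_congr rfl fun t _ => h1 t, ← Finset.sum_sub_distrib,
    Finset.sum_range_sub (fun t => c (fun l => xi γ N t (fun p => f (x (p - 1)) l)) (ρ γ v)),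
    abs_mul, abs_inv, Nat.abs_cast]
  gcongr
  have h3 : ∀ l, |c l (ρ γ v)| ≤ C * ‖v‖ := by
    intro l
    have := (c l).le_of_opNorm_le (hc l) (ρ γ v)
    simpa using this
  refine (abs_sub _ _).trans ?_
  linarith [h3 (fun l => xi γ N N (fun p => f (x (p - 1)) l)),
    h3 (fun l => xi γ N 0 (fun p => f (x (p - 1)) l))]

lemma real_ulim (U : Ultrafilter ℕ) (u : ℕ → ℝ) (C : ℝ) (h : ∀ N, |u N| ≤ C) :
    ∃ θ, Tendsto u U (𝓝 θ) := by
  obtain ⟨a, _, hlim⟩ := (isCompact_Icc (a := -C) (b := C)).ultrafilter_le_nhds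
    (U.map u) (by
      simp only [le_principal_iff]
      apply Filter.mem_map.mpr
      filter_upwards with i
      exact abs_le.mp (h i))
  exact ⟨a, hlim⟩

lemma core {A : Type*} [Finite A] [DecidableEq A] [MeasurableSpace A] [MeasurableSingletonClass A]
    (κ : Measure A) [IsProbabilityMeasure κ] {m : ℕ} (ρ : G →* (F ≃ₗᵢ[ℝ] F))
    (hsep : TopologicalSpace.SeparableSpace (F →L[ℝ] ℝ)) (γ : G) (f : A → Fin m → G)
    (c : (Fin m → G) → (F →L[ℝ] ℝ)) (C : ℝ) (hc : ∀ l, ‖c l‖ ≤ C)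
    (heq : ∀ (h : G) (l : Fin m → G), c (fun k => h * l k) = contragredient ρ h (c l))
    (a : A) (ha : κ.real {a} ≠ 0) (U : Ultrafilter ℕ) (hU : (U : Filter ℕ) ≤ atTop) (v : F) :
    Tendsto (fun N => (∫ x, CN γ f c N (Function.update x 0 a) v
        ∂(Measure.infinitePi (fun _ : ℤ => κ))) -
      ∫ x, CN γ f c N x v ∂(Measure.infinitePi (fun _ : ℤ => κ))) U (𝓝 0) := by
  set μ := Measure.infinitePi (fun _ : ℤ => κ) with hμ
  set r := κ.real {a} with hr
  have hC : 0 ≤ C := (norm_nonneg _).trans (hc fun _ => 1)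
  let φ : ℤ → (ℤ → A) → ℝ := fun k x => (if x k = a then r⁻¹ else 0) - 1
  have hset : ∀ k : ℤ, MeasurableSet {x : ℤ → A | x k = a} := fun k =>
    (measurableSet_singleton a).preimage (measurable_pi_apply (X := fun _ : ℤ => A) k)
  have hφm : ∀ k, Measurable (φ k) := fun k =>
    (Measurable.ite (hset k) measurable_const measurable_const).sub_const 1
  have hφ : ∀ k x, |φ k x| ≤ |r⁻¹| + 1 := by
    intro k x
    simp only [φ]
    refine (abs_sub _ _).trans ?_
    split_ifs <;> simp
  set M := |r⁻¹| + 1 with hM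
  have hM0 : 0 ≤ M := by positivity
  have hI : ∀ (H : (ℤ → A) → ℝ), Measurable H → ∀ B, (∀ x, |H x| ≤ B) → Integrable H μ :=
    fun H hH B hB => Integrable.of_bound hH.aestronglyMeasurable B (ae_of_all _ hB)
  have hres : ∀ (k : ℤ) (H : (ℤ → A) → ℝ), Measurable H → ∀ B, (∀ x, |H x| ≤ B) →
      ∫ x, φ k x * H x ∂μ = (∫ x, H (Function.update x k a) ∂μ) - ∫ x, H x ∂μ := by
    intro k H hH B hB
    have e : ∀ x, φ k x * H x = r⁻¹ * (if x k = a then H x else 0) - H x := by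
      intro x
      simp only [φ]
      split_ifs <;> ring
    simp_rw [e]
    rw [integral_sub, integral_const_mul, resample κ k a H hH B hB, ← hr, ← mul_assoc,
      inv_mul_cancel₀ ha, one_mul]
    · refine Integrable.const_mul (hI _ (Measurable.ite (hset k) hH measurable_const) B ?_) _
      intro x
      split_ifs
      · exact hB x
      · simpa using (abs_nonneg _).trans (hB x)
    · exact hI H hH B hB
  have hφ1 : ∀ k, ∫ x, φ k x ∂μ = 0 := by
    intro k
    have := hres k (fun _ => 1) measurable_const 1 (by simp)
    simpa using this
  have horth : ∀ j k : ℤ, ∫ x, φ j x * φ k x ∂μ = if j = k then r⁻¹ - 1 else 0 := by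
    intro j k
    rw [hres j (φ k) (hφm k) M (hφ k), hφ1, sub_zero]
    by_cases h : j = k
    · subst h; simp [φ]
    · rw [if_neg h, ← hφ1 k]
      congr 1
      funext x
      simp [φ, Function.update_of_ne (Ne.symm h)]
  have hcm : ∀ N v, Measurable (fun x => CN γ f c N x v) := fun N v =>
    ((CN_cyl γ f c N).comp (fun e => e v)).stronglyMeasurable.measurable
  have hcb : ∀ N v x, |CN γ f c N x v| ≤ C * ‖v‖ := fun N v x =>
    (CN γ f c N x).le_of_opNorm_le (CN_bound γ f c C hc N x) v
  have hnorm : ∀ (h : G) (v : F), ‖ρ h v‖ = ‖v‖ := fun h v => (ρ h).norm_map v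
  -- limit for `k = 0`
  have hmulb : ∀ k N v x, |φ k x * CN γ f c N x v| ≤ M * (C * ‖v‖) := by
    intro k N v x
    rw [abs_mul]
    exact mul_le_mul (hφ k x) (hcb N v x) (abs_nonneg _) hM0
  obtain ⟨θ, hθ0⟩ := real_ulim U (fun N => ∫ x, φ 0 x * CN γ f c N x v ∂μ) (M * (C * ‖v‖)) (by
    intro N
    have := norm_integral_le_of_norm_le_const (μ := μ)
      (f := fun x => φ 0 x * CN γ f c N x v) (C := M * (C * ‖v‖)) (ae_of_all _ (hmulb 0 N v))
    simpa using this)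
  have hS : MeasurePreserving (fun (x : ℤ → A) (p : ℤ) => x (p - 1)) μ μ :=
    infinitePi_map_inj κ (fun p : ℤ => p - 1) (sub_left_injective)
  have hθ : ∀ k : ℕ, Tendsto (fun N => ∫ x, φ (k : ℤ) x * CN γ f c N x (ρ (γ ^ k) v) ∂μ) U (𝓝 θ) := by
    intro k
    induction k with
    | zero => simpa using hθ0
    | succ k ih =>
      set u := ρ (γ ^ k) v with hu
      have hu' : ρ (γ ^ (k + 1)) v = ρ γ u := by
        rw [pow_succ', map_mul]; rfl
      rw [hu']
      have e1 : ∀ N, ∫ x, φ ((k + 1 : ℕ) : ℤ) x * CN γ f c N x (ρ γ u) ∂μ =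
          ∫ x, φ (k : ℤ) x * CN γ f c N (fun p => x (p - 1)) (ρ γ u) ∂μ := by
        intro N
        have hmm : Measurable (fun x => φ ((k + 1 : ℕ) : ℤ) x * CN γ f c N x (ρ γ u)) :=
          (hφm _).mul (hcm _ _)
        have h4 := integral_map (μ := μ) hS.measurable.aemeasurable
          (f := fun x => φ ((k + 1 : ℕ) : ℤ) x * CN γ f c N x (ρ γ u)) hmm.aestronglyMeasurable
        rw [hS.map_eq] at h4
        rw [h4]
        congr 1
        funext x
        congr 1
        simp [φ]
      have e2 : Tendsto (fun N : ℕ => (N : ℝ)⁻¹ * (M * (2 * C * ‖u‖))) U (𝓝 0) := by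
        have := (tendsto_inv_atTop_nhds_zero_nat (𝕜 := ℝ)).mul_const (M * (2 * C * ‖u‖))
        rw [zero_mul] at this
        exact this.mono_left hU
      have e3 : Tendsto (fun N => (∫ x, φ (k : ℤ) x * CN γ f c N x u ∂μ) -
          ∫ x, φ ((k + 1 : ℕ) : ℤ) x * CN γ f c N x (ρ γ u) ∂μ) U (𝓝 0) := by
        refine squeeze_zero_norm (fun N => ?_) e2
        have hm2 : Measurable (fun x => φ (k : ℤ) x * CN γ f c N (fun p => x (p - 1)) (ρ γ u)) :=
          (hφm _).mul ((hcm _ _).comp hS.measurable)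
        have hm1 : Measurable (fun x => φ (k : ℤ) x * CN γ f c N x u) := (hφm _).mul (hcm _ _)
        rw [e1, ← integral_sub (hI _ hm1 _ (hmulb k N u))
          (hI _ hm2 (M * (C * ‖ρ γ u‖)) (fun x => by
            rw [abs_mul]
            exact mul_le_mul (hφ k x) (hcb N _ _) (abs_nonneg _) hM0))]
        have := norm_integral_le_of_norm_le_const (μ := μ)
          (f := fun x => φ (k : ℤ) x * CN γ f c N x u -
            φ (k : ℤ) x * CN γ f c N (fun p => x (p - 1)) (ρ γ u))
          (C := M * ((N : ℝ)⁻¹ * (2 * C * ‖u‖))) (ae_of_all _ fun x => by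
            rw [← mul_sub, norm_mul]
            exact mul_le_mul (hφ k x) (CN_shift ρ γ f c C hc heq N x u) (abs_nonneg _) hM0)
        simp only [probReal_univ, mul_one] at this
        refine this.trans (le_of_eq (by ring))
      have := ih.sub e3
      simpa using this
  have hzero : θ = 0 := key_analytic μ hsep U (CN γ f c) C (CN_bound γ f c C hc) hcm
    (fun k : ℕ => φ k) (fun k => hφm k) M (fun k x => hφ k x) (r⁻¹ - 1)
    (fun j k => by rw [horth]; simp) (fun k => ρ (γ ^ k) v) ‖v‖ (fun k => (hnorm _ v).le) θ hθ
  rw [hzero] at hθ0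
  refine hθ0.congr fun N => ?_
  exact hres 0 _ (hcm N v) _ (hcb N v)

end Core
end SelfSim

namespace SelfSim
open Filter Topology MeasureTheory

section Step
variable {G : Type*} [Group G] {F : Type*} [NormedAddCommGroup F] [NormedSpace ℝ F]

/-- the contragredient action as a continuous linear map -/
noncomputable def actL (ρ : G →* (F ≃ₗᵢ[ℝ] F)) (h : G) : (F →L[ℝ] ℝ) →L[ℝ] (F →L[ℝ] ℝ) :=
  (ContinuousLinearMap.compL ℝ F F ℝ).flip (ρ h⁻¹).toLinearIsometry.toContinuousLinearMap

lemma actL_apply (ρ : G →* (F ≃ₗᵢ[ℝ] F)) (h : G) (e : F →L[ℝ] ℝ) :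
    actL ρ h e = contragredient ρ h e := rfl

/-- product measure on `T^m` -/
noncomputable def kap {T : Type*} [MeasurableSpace T] (κ : Measure T) (m : ℕ) :
    Measure (Fin m → T) := Measure.infinitePi (fun _ : Fin m => κ)

/-- product measure on sequences in `T^m` -/
noncomputable def muM {T : Type*} [MeasurableSpace T] (κ : Measure T) (m : ℕ) :
    Measure (ℤ → (Fin m → T)) := Measure.infinitePi (fun _ : ℤ => kap κ m)

instance kap_prob {T : Type*} [MeasurableSpace T] (κ : Measure T) [IsProbabilityMeasure κ] (m : ℕ) :
    IsProbabilityMeasure (kap κ m) := by unfold kap; infer_instance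

instance muM_prob {T : Type*} [MeasurableSpace T] (κ : Measure T) [IsProbabilityMeasure κ] (m : ℕ) :
    IsProbabilityMeasure (muM κ m) := by unfold muM; infer_instance

lemma muM_face {T : Type*} [MeasurableSpace T] (κ : Measure T) [IsProbabilityMeasure κ] (m : ℕ)
    (j : Fin (m + 1)) :
    MeasurePreserving (fun (x : ℤ → (Fin (m + 1) → T)) (p : ℤ) (k : Fin m) => x p (j.succAbove k))
      (muM κ (m + 1)) (muM κ m) := by
  have h1 := infinitePi_map_inj κ (fun k : Fin m => j.succAbove k) Fin.succAbove_right_injective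
  refine ⟨by fun_prop, ?_⟩
  have h2 := Measure.infinitePi_map_pi (μ := fun _ : ℤ => kap κ (m + 1))
    (f := fun _ (y : Fin (m + 1) → T) (k : Fin m) => y (j.succAbove k)) (fun _ => h1.measurable)
  unfold muM
  rw [h2]
  congr 1
  funext _
  exact h1.map_eq

/-- the random elements with vanishing zeroth coordinate -/
def eta {T : Type*} {m : ℕ} (τ : T → G) (γ : G) (N t : ℕ) (x : ℤ → (Fin m → T)) (l : Fin m) : G :=
  xi γ N t (Function.update (fun p => τ (x p l)) 0 1)

lemma eta_cyl {T : Type*} {m : ℕ} (τ : T → G) (γ : G) (N t : ℕ) :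
    IsCyl (fun x : ℤ → (Fin m → T) => eta τ γ N t x) :=
  xi_cyl_update γ N t (fun (a : Fin m → T) l => τ (a l))

lemma cyl_integrable {A V : Type*} [Finite A] [MeasurableSpace A] [MeasurableSingletonClass A]
    [NormedAddCommGroup V] (μ : Measure (ℤ → A)) [IsProbabilityMeasure μ] {Φ : (ℤ → A) → V}
    (h : IsCyl Φ) (C : ℝ) (hC : ∀ x, ‖Φ x‖ ≤ C) : Integrable Φ μ :=
  Integrable.of_bound h.stronglyMeasurable.aestronglyMeasurable C (ae_of_all _ hC)

lemma norm_integral_le' {Ω V : Type*} [MeasurableSpace Ω] [NormedAddCommGroup V] [NormedSpace ℝ V]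
    (μ : Measure Ω) [IsProbabilityMeasure μ] (Φ : Ω → V) (C : ℝ) (hC : ∀ x, ‖Φ x‖ ≤ C) :
    ‖∫ x, Φ x ∂μ‖ ≤ C := by
  have := norm_integral_le_of_norm_le_const (μ := μ) (f := Φ) (C := C) (ae_of_all _ hC)
  simpa using this

set_option linter.unusedSectionVars false

variable {T : Type*} [Finite T] [MeasurableSpace T] [MeasurableSingletonClass T]
  (κ : Measure T) [IsProbabilityMeasure κ]

/-- the integrated prism homotopy -/
noncomputable def bT (τ : T → G) (γ : G) (n : ℕ) (c : (Fin (n + 2) → G) → (F →L[ℝ] ℝ))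
    (N t : ℕ) (w : Fin (n + 1) → G) : F →L[ℝ] ℝ :=
  ∫ x, prism (n + 1) c (fun l => (w l, w l * eta τ γ N t x l)) ∂(muM κ (n + 1))

/-- the averaged integrated prism homotopy -/
noncomputable def bN (τ : T → G) (γ : G) (n : ℕ) (c : (Fin (n + 2) → G) → (F →L[ℝ] ℝ))
    (N : ℕ) (w : Fin (n + 1) → G) : F →L[ℝ] ℝ :=
  (N : ℝ)⁻¹ • ∑ t ∈ Finset.range N, bT κ τ γ n c N t w

lemma prism_cyl (τ : T → G) (γ : G) (n m : ℕ) (c : (Fin (n + 2) → G) → (F →L[ℝ] ℝ))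
    (N t : ℕ) (w : Fin (n + 1) → G) (s : Fin (n + 1) → Fin m) :
    IsCyl (fun x : ℤ → (Fin m → T) =>
      prism (n + 1) c (fun l => (w l, w l * eta τ γ N t x (s l)))) :=
  (eta_cyl τ γ N t).comp (fun e => prism (n + 1) c (fun l => (w l, w l * e (s l))))

lemma bN_bound (τ : T → G) (γ : G) (n : ℕ) (c : (Fin (n + 2) → G) → (F →L[ℝ] ℝ))
    (C : ℝ) (hc : ∀ l, ‖c l‖ ≤ C) (N : ℕ) (w : Fin (n + 1) → G) :
    ‖bN κ τ γ n c N w‖ ≤ ((n + 1 : ℕ) : ℝ) * C := by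
  have hC : 0 ≤ C := (norm_nonneg _).trans (hc fun _ => 1)
  refine avg_bound N _ _ (by positivity) fun t => ?_
  exact norm_integral_le' _ _ _ fun x => prism_bound C (n + 1) c hc _

lemma bN_equiv (ρ : G →* (F ≃ₗᵢ[ℝ] F)) (τ : T → G) (γ : G) (n : ℕ)
    (c : (Fin (n + 2) → G) → (F →L[ℝ] ℝ))
    (C : ℝ) (hc : ∀ l, ‖c l‖ ≤ C)
    (heq : ∀ (h : G) (l : Fin (n + 2) → G), c (fun k => h * l k) = contragredient ρ h (c l))
    (N : ℕ) (h : G) (w : Fin (n + 1) → G) :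
    bN κ τ γ n c N (fun k => h * w k) = contragredient ρ h (bN κ τ γ n c N w) := by
  rw [← actL_apply]
  unfold bN
  rw [_root_.map_smul, map_sum]
  congr 1
  refine Finset.sum_congr rfl fun t _ => ?_
  unfold bT
  rw [← ContinuousLinearMap.integral_comp_comm]
  · congr 1
    funext x
    have h1 := prism_map (fun g => h * g) ((actL ρ h : (F →L[ℝ] ℝ) →+ (F →L[ℝ] ℝ))) (n + 1) c c
      (fun l => heq h l) (fun l => (w l, w l * eta τ γ N t x l))
    simp only [mul_assoc]
    exact h1
  · exact cyl_integrable _ (prism_cyl τ γ n (n + 1) c N t w id) _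
      (fun x => prism_bound C (n + 1) c hc _)

lemma dF_zero_fun {α E : Type*} [AddCommGroup E] (n : ℕ) (z : Fin n → α × α) :
    prism n (fun _ => (0 : E)) z = 0 := by
  have := prism_sub n (fun _ : Fin (n + 1) → α => (0 : E)) (fun _ => 0) z
  simpa using this

lemma bT_dF (τ : T → G) (γ : G) (n : ℕ)
    (c : (Fin (n + 2) → G) → (F →L[ℝ] ℝ))
    (C : ℝ) (hc : ∀ l, ‖c l‖ ≤ C) (hcoc : ∀ l, dF (n + 2) c l = 0)
    (N t : ℕ) (w : Fin (n + 2) → G) :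
    dF (n + 1) (bT κ τ γ n c N t) w =
      (∫ x, c (fun l => w l * eta τ γ N t x l) ∂(muM κ (n + 2))) - c w := by
  have h0 : ∀ j : Fin (n + 2), bT κ τ γ n c N t (fun k => w (j.succAbove k)) =
      ∫ x, prism (n + 1) c (fun l => (w (j.succAbove l), w (j.succAbove l) *
        eta τ γ N t x (j.succAbove l))) ∂(muM κ (n + 2)) := by
    intro j
    have mp := muM_face κ (n + 1) j
    unfold bT
    rw [← mp.map_eq, integral_map mp.measurable.aemeasurable]
    · rfl
    · exact (prism_cyl τ γ n (n + 1) c N t _ id).stronglyMeasurable.aestronglyMeasurable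
  have hi : ∀ j : Fin (n + 2), Integrable (fun x => prism (n + 1) c (fun l =>
      (w (j.succAbove l), w (j.succAbove l) * eta τ γ N t x (j.succAbove l)))) (muM κ (n + 2)) :=
    fun j => cyl_integrable _ (prism_cyl τ γ n (n + 2) c N t _ _) _
      (fun x => prism_bound C (n + 1) c hc _)
  have hi2 : Integrable (fun x => c (fun l => w l * eta τ γ N t x l)) (muM κ (n + 2)) :=
    cyl_integrable _ ((eta_cyl τ γ N t).comp (fun e => c (fun l => w l * e l))) C (fun x => hc _)
  have h1 : dF (n + 1) (bT κ τ γ n c N t) w = ∫ x, dF (n + 1) (prism (n + 1) c)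
      (fun l => (w l, w l * eta τ γ N t x l)) ∂(muM κ (n + 2)) := by
    unfold dF
    rw [integral_finsetSum Finset.univ (f := fun (j : Fin (n + 2)) x => ((-1 : ℝ) ^ (j : ℕ)) •
      prism (n + 1) c (fun l => (w (j.succAbove l), w (j.succAbove l) *
        eta τ γ N t x (j.succAbove l)))) (fun j _ => (hi j).smul ((-1 : ℝ) ^ (j : ℕ)))]
    refine Finset.sum_congr rfl fun j _ => ?_
    rw [h0 j, integral_smul]
  have h2 : ∀ x : ℤ → (Fin (n + 2) → T), dF (n + 1) (prism (n + 1) c)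
      (fun l => (w l, w l * eta τ γ N t x l)) = c (fun l => w l * eta τ γ N t x l) - c w := by
    intro x
    have := prism_dF (n + 1) c (fun l => (w l, w l * eta τ γ N t x l))
    have h3 : dF (n + 1 + 1) c = fun _ => 0 := funext hcoc
    rw [h3, dF_zero_fun, zero_add] at this
    exact this
  rw [h1]
  simp_rw [h2]
  rw [integral_sub hi2 (integrable_const _)]
  simp

lemma bN_dF (τ : T → G) (γ : G)
    (hcomm : ∀ q : ℤ, q ≠ 0 → ∀ a b : T, Commute (τ a) (γ ^ q * τ b * γ ^ (-q))) (n : ℕ)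
    (c : (Fin (n + 2) → G) → (F →L[ℝ] ℝ))
    (C : ℝ) (hc : ∀ l, ‖c l‖ ≤ C) (hcoc : ∀ l, dF (n + 2) c l = 0)
    (N : ℕ) (hN : 0 < N) (w : Fin (n + 2) → T) :
    dF (n + 1) (bN κ τ γ n c N) (fun l => τ (w l)) =
      (∫ x, CN γ (fun (a : Fin (n + 2) → T) l => τ (a l)) c N (Function.update x 0 w)
        ∂(muM κ (n + 2))) - c (fun l => τ (w l)) := by
  have h1 : dF (n + 1) (bN κ τ γ n c N) (fun l => τ (w l)) = (N : ℝ)⁻¹ •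
      ∑ t ∈ Finset.range N, dF (n + 1) (bT κ τ γ n c N t) (fun l => τ (w l)) := by
    unfold dF bN
    rw [Finset.sum_comm, Finset.smul_sum]
    refine Finset.sum_congr rfl fun j _ => ?_
    rw [smul_comm, Finset.smul_sum]
  have hN' : (N : ℝ) ≠ 0 := by positivity
  rw [h1, Finset.sum_congr rfl fun t _ => bT_dF κ τ γ n c C hc hcoc N t (fun l => τ (w l)),
    Finset.sum_sub_distrib, smul_sub]
  congr 1
  · unfold CN
    rw [integral_smul, integral_finsetSum]
    · congr 1
      refine Finset.sum_congr rfl fun t ht => ?_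
      congr 1
      funext x
      congr 1
      funext l
      unfold eta
      rw [xi_pull γ N t (Finset.mem_range.mp ht) _ _ (fun q hq => hcomm q hq _ _)]
      congr 1
      funext p
      by_cases hp : p = 0
      · subst hp; simp
      · simp [hp]
    · intro t _
      exact cyl_integrable _ (((xi_cyl γ N t (fun (a : Fin (n + 2) → T) l => τ (a l))).comp
        c).update 0 w) C (fun x => hc _)
  · simp only [Finset.sum_const, Finset.card_range]
    rw [← Nat.cast_smul_eq_nsmul ℝ, smul_smul, inv_mul_cancel₀ hN', one_smul]

lemma dF_tendsto {α ι : Type*} (n : ℕ) (L : Filter ι) (b : ι → (Fin n → α) → (F →L[ℝ] ℝ))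
    (b' : (Fin n → α) → (F →L[ℝ] ℝ)) (v : F)
    (h : ∀ w, Tendsto (fun i => b i w v) L (𝓝 (b' w v))) (w : Fin (n + 1) → α) :
    Tendsto (fun i => dF n (b i) w v) L (𝓝 (dF n b' w v)) := by
  unfold dF
  simp only [sum_apply, smul_apply]
  exact tendsto_finsetSum _ fun j _ => (h _).const_smul _

lemma stepS (hκ : ∀ a : T, κ.real {a} ≠ 0) (ρ : G →* (F ≃ₗᵢ[ℝ] F))
    (hsep : TopologicalSpace.SeparableSpace (F →L[ℝ] ℝ)) (τ : T → G) (γ : G)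
    (hcomm : ∀ q : ℤ, q ≠ 0 → ∀ a b : T, Commute (τ a) (γ ^ q * τ b * γ ^ (-q))) (n : ℕ)
    (c : (Fin (n + 2) → G) → (F →L[ℝ] ℝ))
    (C : ℝ) (hc : ∀ l, ‖c l‖ ≤ C) (hcoc : ∀ l, dF (n + 2) c l = 0)
    (heq : ∀ (h : G) (l : Fin (n + 2) → G), c (fun k => h * l k) = contragredient ρ h (c l)) :
    ∃ (b : (Fin (n + 1) → G) → (F →L[ℝ] ℝ)) (k : F →L[ℝ] ℝ),
      (∀ w, ‖b w‖ ≤ ((n + 1 : ℕ) : ℝ) * C) ∧ ‖k‖ ≤ C ∧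
      (∀ h w, b (fun k => h * w k) = contragredient ρ h (b w)) ∧
      ∀ w : Fin (n + 2) → T, dF (n + 1) b (fun l => τ (w l)) = k - c (fun l => τ (w l)) := by
  classical
  let U : Ultrafilter ℕ := Ultrafilter.of atTop
  have hU : (U : Filter ℕ) ≤ atTop := Ultrafilter.of_le atTop
  choose b hb hblim using fun w => exists_ulim U (fun N => bN κ τ γ n c N w) _
    (fun N => bN_bound κ τ γ n c C hc N w)
  let f : (Fin (n + 2) → T) → Fin (n + 2) → G := fun a l => τ (a l)
  obtain ⟨k, hk, hklim⟩ := exists_ulim U (fun N => ∫ x, CN γ f c N x ∂(muM κ (n + 2))) C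
    (fun N => norm_integral_le' _ _ _ fun x => CN_bound γ f c C hc N x)
  refine ⟨b, k, hb, hk, fun h w => ?_, fun w => ?_⟩
  · ext v
    have h1 := hblim (fun k => h * w k) v
    have h2 := hblim w (ρ h⁻¹ v)
    refine tendsto_nhds_unique h1 (h2.congr fun N => ?_)
    rw [bN_equiv κ ρ τ γ n c C hc heq N h w]
    rfl
  · ext v
    have h1 := dF_tendsto (n + 1) (U : Filter ℕ) (fun N w => bN κ τ γ n c N w) b v
      (fun w => hblim w v) (fun l => τ (w l))
    have hne : (kap κ (n + 2)).real {w} ≠ 0 := by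
      unfold kap
      rw [measureReal_def, Measure.infinitePi_singleton_of_fintype, ENNReal.toReal_prod]
      exact Finset.prod_ne_zero_iff.mpr fun i _ => hκ (w i)
    have h2 := core (kap κ (n + 2)) ρ hsep γ f c C hc heq w hne U hU v
    have h3 := (h2.add (hklim v)).sub_const (c (fun l => τ (w l)) v)
    rw [zero_add] at h3
    refine tendsto_nhds_unique h1 (h3.congr' ?_)
    have hev : ∀ᶠ N in (U : Filter ℕ), 0 < N := hU (eventually_gt_atTop 0)
    filter_upwards [hev] with N hN
    have h4 := bN_dF κ τ γ hcomm n c C hc hcoc N hN w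
    have h5 : (fun w => bN κ τ γ n c N w) = bN κ τ γ n c N := rfl
    rw [h5, h4, sub_apply]
    congr 1
    rw [ContinuousLinearMap.integral_apply (cyl_integrable _ (CN_cyl γ f c N) C
      (CN_bound γ f c C hc N)), ContinuousLinearMap.integral_apply (cyl_integrable _
      ((CN_cyl γ f c N).update 0 w) C (fun x => CN_bound γ f c C hc N _))]
    unfold muM
    ring

end Step
end SelfSim

namespace SelfSim
open Filter Topology MeasureTheory

section Global
variable {G : Type*} [Group G] {F : Type*} [NormedAddCommGroup F] [NormedSpace ℝ F]

lemma stepFinset (G₀ : Subgroup G)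
    (hconj : ∀ S : Finset G, ∃ t : G, ∀ x ∈ S, t⁻¹ * x * t ∈ G₀)
    (g : G)
    (hcomm : ∀ p q : ℤ, p ≠ q → ∀ a ∈ G₀, ∀ b ∈ G₀,
      (g ^ p * a * g ^ (-p)) * (g ^ q * b * g ^ (-q)) =
      (g ^ q * b * g ^ (-q)) * (g ^ p * a * g ^ (-p)))
    (ρ : G →* (F ≃ₗᵢ[ℝ] F))
    (hsep : TopologicalSpace.SeparableSpace (F →L[ℝ] ℝ)) (n : ℕ)
    (c : (Fin (n + 2) → G) → (F →L[ℝ] ℝ))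
    (C : ℝ) (hc : ∀ l, ‖c l‖ ≤ C) (hcoc : ∀ l, dF (n + 2) c l = 0)
    (heq : ∀ (h : G) (l : Fin (n + 2) → G), c (fun k => h * l k) = contragredient ρ h (c l))
    (S : Finset G) :
    ∃ (b : (Fin (n + 1) → G) → (F →L[ℝ] ℝ)) (k : F →L[ℝ] ℝ),
      (∀ w, ‖b w‖ ≤ ((n + 1 : ℕ) : ℝ) * C) ∧ ‖k‖ ≤ C ∧
      (∀ h w, b (fun k => h * w k) = contragredient ρ h (b w)) ∧
      ∀ w : Fin (n + 2) → G, (∀ l, w l ∈ S) → dF (n + 1) b w = k - c w := by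
  classical
  rcases S.eq_empty_or_nonempty with hS | hS
  · subst hS
    refine ⟨fun _ => 0, 0, ?_, ?_, ?_, ?_⟩
    · intro w
      have hC : 0 ≤ C := (norm_nonneg _).trans (hc fun _ => 1)
      rw [norm_zero]; positivity
    · simpa using (norm_nonneg _).trans (hc fun _ => 1)
    · intro h w
      rw [← actL_apply, map_zero]
    · intro w hw
      exact absurd (hw 0) (by simp)
  obtain ⟨t, ht⟩ := hconj S
  have : Nonempty S := hS.to_subtype
  let _ : MeasurableSpace S := ⊤
  let κ : Measure S := (PMF.uniformOfFintype S).toMeasure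
  have hκ : ∀ a : S, κ.real {a} ≠ 0 := by
    intro a
    rw [measureReal_def, PMF.toMeasure_apply_singleton _ _ (measurableSet_singleton a)]
    simp [PMF.uniformOfFintype_apply, hS.ne_empty]
  obtain ⟨b, k, h1, h2, h3, h4⟩ := stepS κ hκ ρ hsep (fun a : S => (a : G)) (t * g * t⁻¹) (by
    intro q hq a b
    have h0 := hcomm 0 q (Ne.symm hq) _ (ht a a.2) _ (ht b b.2)
    have h5 : Commute (t⁻¹ * a * t) (g ^ q * (t⁻¹ * b * t) * g ^ (-q)) := by
      rw [zpow_zero, neg_zero, zpow_zero, one_mul, mul_one] at h0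
      exact h0
    have h6 := (Commute.conj_iff t).mpr h5
    convert h6 using 1
    · group
    · rw [conj_zpow, conj_zpow]; group) n c C hc hcoc heq
  refine ⟨b, k, h1, h2, h3, fun w hw => ?_⟩
  exact h4 (fun l => ⟨w l, hw l⟩)

lemma global (G₀ : Subgroup G)
    (hconj : ∀ S : Finset G, ∃ t : G, ∀ x ∈ S, t⁻¹ * x * t ∈ G₀)
    (g : G)
    (hcomm : ∀ p q : ℤ, p ≠ q → ∀ a ∈ G₀, ∀ b ∈ G₀,
      (g ^ p * a * g ^ (-p)) * (g ^ q * b * g ^ (-q)) =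
      (g ^ q * b * g ^ (-q)) * (g ^ p * a * g ^ (-p)))
    (ρ : G →* (F ≃ₗᵢ[ℝ] F))
    (hsep : TopologicalSpace.SeparableSpace (F →L[ℝ] ℝ)) (n : ℕ)
    (c : (Fin (n + 2) → G) → (F →L[ℝ] ℝ))
    (C : ℝ) (hc : ∀ l, ‖c l‖ ≤ C) (hcoc : ∀ l, dF (n + 2) c l = 0)
    (heq : ∀ (h : G) (l : Fin (n + 2) → G), c (fun k => h * l k) = contragredient ρ h (c l)) :
    ∃ (b : (Fin (n + 1) → G) → (F →L[ℝ] ℝ)) (k : F →L[ℝ] ℝ),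
      (∀ w, ‖b w‖ ≤ ((n + 1 : ℕ) : ℝ) * C) ∧
      (∀ h w, b (fun k => h * w k) = contragredient ρ h (b w)) ∧
      ∀ w : Fin (n + 2) → G, dF (n + 1) b w = k - c w := by
  classical
  choose bS kS h1 h2 h3 h4 using
    stepFinset G₀ hconj g hcomm ρ hsep n c C hc hcoc heq
  let U : Ultrafilter (Finset G) := Ultrafilter.of atTop
  have hU : (U : Filter (Finset G)) ≤ atTop := Ultrafilter.of_le atTop
  choose b hb hblim using fun w => exists_ulim U (fun S => bS S w) _ (fun S => h1 S w)
  obtain ⟨k, hk, hklim⟩ := exists_ulim U kS C h2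
  refine ⟨b, k, hb, fun h w => ?_, fun w => ?_⟩
  · ext v
    refine tendsto_nhds_unique (hblim (fun k => h * w k) v)
      ((hblim w (ρ h⁻¹ v)).congr fun S => ?_)
    rw [h3 S h w]
    rfl
  · ext v
    have e1 := dF_tendsto (n + 1) (U : Filter (Finset G)) bS b v (fun w => hblim w v) w
    have e2 := (hklim v).sub_const (c w v)
    refine tendsto_nhds_unique e1 (e2.congr' ?_)
    have hev : ∀ᶠ S in (U : Filter (Finset G)), Finset.univ.image w ≤ S :=
      hU (eventually_ge_atTop _)
    filter_upwards [hev] with S hS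
    rw [h4 S w (fun l => hS (Finset.mem_image_of_mem w (Finset.mem_univ l)))]
    rfl

lemma dF_const {α E : Type*} [AddCommGroup E] [Module ℝ E] (n : ℕ) (k : E)
    (w : Fin (n + 1) → α) : dF n (fun _ => k) w = if Even (n + 1) then 0 else k := by
  unfold dF
  rw [← Finset.sum_smul, Fin.sum_neg_one_pow]
  split_ifs <;> simp

lemma dF_diag {α E : Type*} [AddCommGroup E] [Module ℝ E] (n : ℕ) (c : (Fin n → α) → E) (a : α) :
    dF n c (fun _ => a) = if Even (n + 1) then 0 else c (fun _ => a) := by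
  rw [← dF_const n (c fun _ => a) (fun _ => a)]
  rfl

lemma dF_equiv {E : Type*} [AddCommGroup E] [Module ℝ E] (n : ℕ)
    (c : (Fin n → G) → E) (h : G) (A : E →ₗ[ℝ] E)
    (hA : ∀ l, c (fun k => h * l k) = A (c l)) (w : Fin (n + 1) → G) :
    dF n c (fun k => h * w k) = A (dF n c w) := by
  unfold dF
  rw [map_sum]
  refine Finset.sum_congr rfl fun j _ => ?_
  rw [_root_.map_smul, ← hA]

lemma contragredient_mul (ρ : G →* (F ≃ₗᵢ[ℝ] F)) (a b : G) (e : F →L[ℝ] ℝ) :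
    contragredient ρ (a * b) e = contragredient ρ a (contragredient ρ b e) := by
  ext v
  have : ρ (a * b)⁻¹ v = ρ b⁻¹ (ρ a⁻¹ v) := by
    rw [mul_inv_rev, map_mul]; rfl
  exact congrArg e this

lemma contragredient_one (ρ : G →* (F ≃ₗᵢ[ℝ] F)) (e : F →L[ℝ] ℝ) :
    contragredient ρ 1 e = e := by
  ext v
  have : ρ (1 : G)⁻¹ v = v := by rw [inv_one, map_one]; rfl
  exact congrArg e this

lemma contragredient_norm (ρ : G →* (F ≃ₗᵢ[ℝ] F)) (a : G) (e : F →L[ℝ] ℝ) :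
    ‖contragredient ρ a e‖ ≤ ‖e‖ := by
  refine ContinuousLinearMap.opNorm_le_bound _ (norm_nonneg _) fun v => ?_
  have := e.le_opNorm (ρ a⁻¹ v)
  rw [LinearIsometryEquiv.norm_map] at this
  exact this

lemma main (G₀ : Subgroup G)
    (hconj : ∀ S : Finset G, ∃ t : G, ∀ x ∈ S, t⁻¹ * x * t ∈ G₀)
    (g : G)
    (hcomm : ∀ p q : ℤ, p ≠ q → ∀ a ∈ G₀, ∀ b ∈ G₀,
      (g ^ p * a * g ^ (-p)) * (g ^ q * b * g ^ (-q)) =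
      (g ^ q * b * g ^ (-q)) * (g ^ p * a * g ^ (-p)))
    (ρ : G →* (F ≃ₗᵢ[ℝ] F))
    (hsep : TopologicalSpace.SeparableSpace (F →L[ℝ] ℝ)) :
    HbVanish (contragredient ρ) := by
  rintro n f ⟨C, hf⟩ hδ
  let c : (Fin (n + 2) → G) → (F →L[ℝ] ℝ) := fun l =>
    contragredient ρ (l 0) (f (fun j => (l j.castSucc)⁻¹ * l j.succ))
  have hc : ∀ l, ‖c l‖ ≤ C := fun l => (contragredient_norm ρ _ _).trans (hf _)
  have heq : ∀ (h : G) (l : Fin (n + 2) → G),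
      c (fun k => h * l k) = contragredient ρ h (c l) := by
    intro h l
    simp only [c]
    rw [contragredient_mul]
    congr 2
    congr 1
    funext j
    group
  have hcf : ∀ x, c (Fin.partialProd x) = f x := by
    intro x
    simp only [c]
    rw [Fin.partialProd_zero, contragredient_one]
    congr 1
    funext j
    exact Fin.partialProd_right_inv x j
  have hcoc : ∀ l, dF (n + 2) c l = 0 := by
    intro l
    have h1 := Fin.partialProd_left_inv l
    rw [← h1]
    have h2 := dF_equiv (n + 2) c (l 0) (actL ρ (l 0) : (F →L[ℝ] ℝ) →ₗ[ℝ] (F →L[ℝ] ℝ))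
      (fun l' => heq _ l') (Fin.partialProd fun i => (l i.castSucc)⁻¹ * l i.succ)
    refine h2.trans ?_
    have h3 := bddDelta_eq_dF (contragredient ρ) (n + 1) c heq
      (fun i => (l i.castSucc)⁻¹ * l i.succ)
    have h4 : (fun x => c (Fin.partialProd x)) = f := funext hcf
    rw [h4, hδ] at h3
    rw [← h3]
    simp
  obtain ⟨b, k, hb, hbe, hbk⟩ := global G₀ hconj g hcomm ρ hsep n c C hc hcoc heq
  have hkinv : ∀ h, contragredient ρ h k = k := by
    intro h
    have e1 := hbk (fun j => h * (fun _ => (1 : G)) j)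
    have e2 := dF_equiv (n + 1) b h (actL ρ h : (F →L[ℝ] ℝ) →ₗ[ℝ] (F →L[ℝ] ℝ))
      (fun l' => hbe _ l') (fun _ => (1 : G))
    rw [e2, hbk, heq h (fun _ => 1), map_sub] at e1
    exact sub_left_injective (b := contragredient ρ h (c fun _ => 1)) e1
  have hkeven : Even n → k = 0 := by
    intro hn
    have e1 := hbk (fun _ => 1)
    rw [dF_diag, if_pos (by simpa [Nat.even_add_one] using hn)] at e1
    have e2 := hcoc (fun _ => 1)
    rw [dF_diag, if_neg (by simpa [Nat.even_add_one] using hn)] at e2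
    rw [e2, sub_zero] at e1
    exact e1.symm
  have hdk : ∀ w : Fin (n + 2) → G, dF (n + 1) (fun _ => k) w = k := by
    intro w
    rw [dF_const]
    split_ifs with h
    · exact (hkeven (by simpa [Nat.even_add_one] using h)).symm
    · rfl
  refine ⟨fun x => k - b (Fin.partialProd x), ⟨‖k‖ + ((n + 1 : ℕ) : ℝ) * C, fun x => ?_⟩, ?_⟩
  · exact (norm_sub_le _ _).trans (by gcongr; exact hb _)
  · funext x
    have h1 := bddDelta_eq_dF (contragredient ρ) n (fun l => k - b l) (by
      intro h l
      rw [hbe, ← actL_apply ρ h (k - b l), map_sub, actL_apply, actL_apply, hkinv]) x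
    refine h1.trans ?_
    rw [dF_sub, hdk, hbk, sub_sub_cancel, hcf]

end Global
end SelfSim

/-- Let `G₀ ≤ G` be a subgroup such that every finite subset of `G`
is contained in some `G`-conjugate of `G₀`, and such that `G` contains an element `g`
whose conjugates of `G₀` by distinct powers commute.  Then `Hb^n(G,E) = 0` for all
`n ≥ 1` and all separable dual Banach `G`-modules `E = F*`. -/
theorem vanishing_of_selfSimilar.{u}
    {G : Type*} [Group G] (G₀ : Subgroup G)
    (hconj : ∀ S : Finset G, ∃ t : G, ∀ x ∈ S, t⁻¹ * x * t ∈ G₀)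
    (g : G)
    (hcomm : ∀ p q : ℤ, p ≠ q → ∀ a ∈ G₀, ∀ b ∈ G₀,
      (g ^ p * a * g ^ (-p)) * (g ^ q * b * g ^ (-q)) =
      (g ^ q * b * g ^ (-q)) * (g ^ p * a * g ^ (-p)))
    (F : Type u) [NormedAddCommGroup F] [NormedSpace ℝ F] [CompleteSpace F]
    (ρ : G →* (F ≃ₗᵢ[ℝ] F))
    (hsep : TopologicalSpace.SeparableSpace (F →L[ℝ] ℝ)) :
    HbVanish (contragredient ρ) := by
  exact SelfSim.main G₀ hconj g hcomm ρ hsep
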